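/- The n-dimensional Mehler-type kernel Φ(τ,Y,a,B) = (4πτ)^{-n/2}·det(Θ/sinh Θ)^{1/2}·exp{-(1/(4τ))Y(Θ cosh Θ/sinh Θ)Yᵀ - 2τY((cosh Θ - 1)/(Θ sinh Θ))Baᵀ - 2τa((cosh Θ♯ - 1)/(Θ♯ sinh Θ♯))aᵀ} satisfies ∂Φ/∂τ - ΔΦ + (a + YB)(a + YB)ᵀ·Φ = 0, where Δ = Σᵢ ∂²/∂yᵢ². -/

import Mathlib

/-!
The kernel separates in eigencoordinates. Put `w = Uᵀ Y`, `m = Uᵀ B a`, `α = Vᵀ a`. Then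
`Φ = ∏ p(d k) * exp S` with
`S = ∑ (q(d k) w k ^ 2 - c(d k) m k w k) - ∑ c(e j) α j ^ 2`, where
`q = -(d/2) coth (2τd)` is `quadCoeff`, `c = tanh (τd) / d` is `linCoeff`, and `p` is
`normFactor`, each extended to `d = 0` by its limit. Orthogonality of `U` turns the Laplacian
into the one in `w`, so that `ΔΦ = Φ * (∑ 2 q + ∑ (2 q w - c m) ^ 2)`, while the potential is
`|α|² + 2 w·m + ∑ d² w²`.

Comparing coefficients, the equation reduces to one-variable facts: `p' = 2 q p`,
`q' = 4 q² - d²`, `c' = 1 - d² c²` and `4 q c = -1 - d² c²`. What is left is the term independent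
of `Y`, where the two spectral decompositions meet:
`∑ c(d k)² m k ^ 2 = ∑ e j ^ 2 c(e j)² α j ^ 2`. This is `sum_intertwine`, which holds because
`Uᵀ B V` intertwines functions of `d` with functions of `e`.
-/

open Real Matrix

/-- Apply a scalar function spectrally, via an orthogonal diagonalization. -/
noncomputable def matFun {n : ℕ} (U : Matrix (Fin n) (Fin n) ℝ) (d : Fin n → ℝ)
    (f : ℝ → ℝ) : Matrix (Fin n) (Fin n) ℝ :=
  U * Matrix.diagonal (fun i => f (d i)) * Uᵀ

/-- `x / sinh x`, extended by its limit `1` at `x = 0`. -/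
noncomputable def xDivSinh (x : ℝ) : ℝ := if x = 0 then 1 else x / Real.sinh x

/-- `x cosh x / sinh x`, extended by its limit `1` at `x = 0`. -/
noncomputable def xCoshDivSinh (x : ℝ) : ℝ :=
  if x = 0 then 1 else x * Real.cosh x / Real.sinh x

/-- `(cosh x - 1)/(x sinh x)`, extended by its limit `1/2` at `x = 0`. -/
noncomputable def coshSubOneDivXSinh (x : ℝ) : ℝ :=
  if x = 0 then 1 / 2 else (Real.cosh x - 1) / (x * Real.sinh x)

/-! ### Scalar coefficients and their differential equations -/

/-- The coefficient of `w²` in the exponent for an eigenvalue `d` of `(BBᵀ)^{1/2}`;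
for `τ > 0` it equals `-(d/2) coth (2τd)`, or `-1/(4τ)` when `d = 0`. -/
noncomputable def quadCoeff (d τ : ℝ) : ℝ := -(1 / (4 * τ)) * xCoshDivSinh (2 * τ * d)

/-- Minus the coefficient of the linear and constant terms in the exponent for an
eigenvalue `d`; for `τ > 0` it equals `tanh (τd) / d`, or `τ` when `d = 0`. -/
noncomputable def linCoeff (d τ : ℝ) : ℝ := 2 * τ * coshSubOneDivXSinh (2 * τ * d)

/-- The factor of the normalising constant contributed by an eigenvalue `d`. -/
noncomputable def normFactor (d τ : ℝ) : ℝ :=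
  1 / Real.sqrt (4 * π * τ) * Real.sqrt (xDivSinh (2 * τ * d))

lemma quadCoeff_zero (τ : ℝ) : quadCoeff 0 τ = -(1 / (4 * τ)) := by
  simp [quadCoeff, xCoshDivSinh]

lemma linCoeff_zero (τ : ℝ) : linCoeff 0 τ = τ := by
  simp [linCoeff, coshSubOneDivXSinh]; ring

lemma quadCoeff_of_ne {d τ : ℝ} (hd : d ≠ 0) (hτ : τ ≠ 0) :
    quadCoeff d τ = -(d / 2) * (Real.cosh (2 * τ * d) / Real.sinh (2 * τ * d)) := by
  have : 2 * τ * d ≠ 0 := by positivity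
  rw [quadCoeff, xCoshDivSinh, if_neg this]
  field_simp
  ring

lemma linCoeff_of_ne {d τ : ℝ} (hd : d ≠ 0) (hτ : τ ≠ 0) :
    linCoeff d τ = (Real.cosh (2 * τ * d) - 1) / (d * Real.sinh (2 * τ * d)) := by
  have : 2 * τ * d ≠ 0 := by positivity
  rw [linCoeff, coshSubOneDivXSinh, if_neg this]
  field_simp

lemma eventually_pos {τ : ℝ} (hτ : 0 < τ) : ∀ᶠ s in nhds τ, 0 < s :=
  lt_mem_nhds hτ

lemma sinh_ne {d τ : ℝ} (hd : 0 < d) (hτ : 0 < τ) : Real.sinh (2 * τ * d) ≠ 0 := by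
  have : 0 < 2 * τ * d := by positivity
  exact (Real.sinh_pos_iff.2 this).ne'

lemma hasDerivAt_cosh_sinh (d τ : ℝ) :
    HasDerivAt (fun s => Real.cosh (2 * s * d)) (Real.sinh (2 * τ * d) * (2 * d)) τ ∧
    HasDerivAt (fun s => Real.sinh (2 * s * d)) (Real.cosh (2 * τ * d) * (2 * d)) τ := by
  have h : HasDerivAt (fun s : ℝ => 2 * s * d) (2 * d) τ := by
    simpa using ((hasDerivAt_id τ).const_mul 2).mul_const d
  exact ⟨h.cosh, h.sinh⟩

/-- The Riccati equation of the quadratic coefficient. -/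
lemma hasDerivAt_quadCoeff {d τ : ℝ} (hd : 0 ≤ d) (hτ : 0 < τ) :
    HasDerivAt (quadCoeff d) (4 * quadCoeff d τ ^ 2 - d ^ 2) τ := by
  rcases hd.eq_or_lt with rfl | hd
  · have h : HasDerivAt (fun s : ℝ => -(1 / (4 * s))) (4 * quadCoeff 0 τ ^ 2 - 0 ^ 2) τ := by
      have h1 := (((hasDerivAt_id τ).const_mul 4).inv (by simpa using hτ.ne')).neg
      simp only [one_div]
      refine h1.congr_deriv ?_
      rw [quadCoeff_zero]; simp; field_simp
    exact h.congr_of_eventuallyEq (.of_forall fun s => quadCoeff_zero s)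
  · obtain ⟨hc, hs⟩ := hasDerivAt_cosh_sinh d τ
    have h0 := sinh_ne hd hτ
    refine HasDerivAt.congr_of_eventuallyEq (f := fun s =>
      -(d / 2) * (Real.cosh (2 * s * d) / Real.sinh (2 * s * d))) ?_ ?_
    · refine ((hc.div hs h0).const_mul (-(d / 2))).congr_deriv ?_
      rw [quadCoeff_of_ne hd.ne' hτ.ne']
      field_simp
      ring
    · filter_upwards [eventually_pos hτ] with s hs using quadCoeff_of_ne hd.ne' hs.ne'

/-- The Riccati equation `c' = 1 - d²c²` satisfied by `c = tanh (τd) / d`. -/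
lemma hasDerivAt_linCoeff {d τ : ℝ} (hd : 0 ≤ d) (hτ : 0 < τ) :
    HasDerivAt (linCoeff d) (1 - d ^ 2 * linCoeff d τ ^ 2) τ := by
  rcases hd.eq_or_lt with rfl | hd
  · have h : HasDerivAt (fun s : ℝ => s) (1 - 0 ^ 2 * linCoeff 0 τ ^ 2) τ := by
      exact (hasDerivAt_id τ).congr_deriv (by simp)
    exact h.congr_of_eventuallyEq (.of_forall fun s => linCoeff_zero s)
  · obtain ⟨hc, hs⟩ := hasDerivAt_cosh_sinh d τ
    have h0 := sinh_ne hd hτ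
    refine HasDerivAt.congr_of_eventuallyEq (f := fun s =>
      (Real.cosh (2 * s * d) - 1) / (d * Real.sinh (2 * s * d))) ?_ ?_
    · refine ((hc.sub_const 1).div (hs.const_mul d) (mul_ne_zero hd.ne' h0)).congr_deriv ?_
      rw [linCoeff_of_ne hd.ne' hτ.ne']
      have := Real.cosh_sq (2 * τ * d)
      field_simp
      linear_combination -this
    · filter_upwards [eventually_pos hτ] with s hs using linCoeff_of_ne hd.ne' hs.ne'

/-- The half-angle identity `coth (2x) · 2 tanh x = 1 + tanh² x`, which cancels the terms
linear in `Y`. -/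
lemma four_mul_quadCoeff_mul_linCoeff {d τ : ℝ} (hd : 0 ≤ d) (hτ : 0 < τ) :
    4 * quadCoeff d τ * linCoeff d τ = -1 - d ^ 2 * linCoeff d τ ^ 2 := by
  rcases hd.eq_or_lt with rfl | hd
  · rw [quadCoeff_zero, linCoeff_zero]; field_simp; norm_num
  · have h0 := sinh_ne hd hτ
    rw [quadCoeff_of_ne hd.ne' hτ.ne', linCoeff_of_ne hd.ne' hτ.ne']
    have := Real.cosh_sq (2 * τ * d)
    generalize Real.cosh (2 * τ * d) = C at *
    generalize Real.sinh (2 * τ * d) = T at *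
    field_simp
    linear_combination -2 * this

lemma hasDerivAt_normFactor {d τ : ℝ} (hd : 0 ≤ d) (hτ : 0 < τ) :
    HasDerivAt (normFactor d) (normFactor d τ * (2 * quadCoeff d τ)) τ := by
  have hpi := Real.pi_pos
  -- Near `τ` the factor is `(√g)⁻¹` with `g` smooth and positive.
  have key : ∀ (g : ℝ → ℝ) (g' : ℝ), HasDerivAt g g' τ → 0 < g τ →
      (∀ s, 0 < s → normFactor d s = (√(g s))⁻¹) → g' = -(4 * quadCoeff d τ) * g τ →
      HasDerivAt (normFactor d) (normFactor d τ * (2 * quadCoeff d τ)) τ := by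
    intro g g' hg hpos heq hg'
    have hs : √(g τ) ≠ 0 := (Real.sqrt_pos.2 hpos).ne'
    refine HasDerivAt.congr_of_eventuallyEq (f := fun s => (√(g s))⁻¹) ?_ ?_
    · refine ((hg.sqrt hpos.ne').inv hs).congr_deriv ?_
      rw [heq τ hτ, hg']
      have := Real.sq_sqrt hpos.le
      field_simp
      linear_combination -(4 * quadCoeff d τ) * this
    · filter_upwards [eventually_pos hτ] with s hs using heq s hs
  rcases hd.eq_or_lt with rfl | hd
  · refine key (fun s => 4 * π * s) (4 * π) ?_ (by positivity) ?_ ?_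
    · simpa using (hasDerivAt_id τ).const_mul (4 * π)
    · intro s hs; simp [normFactor, xDivSinh]
    · rw [quadCoeff_zero]; field_simp
  · obtain ⟨hc, hs⟩ := hasDerivAt_cosh_sinh d τ
    have hp : ∀ s, 0 < s → 0 < Real.sinh (2 * s * d) := fun s hs =>
      Real.sinh_pos_iff.2 (by positivity)
    have hp' := hp τ hτ
    refine key (fun s => 4 * π / (2 * d) * Real.sinh (2 * s * d)) _ (hs.const_mul _)
      (by positivity) ?_ ?_
    · intro s hs
      have := hp s hs
      have hne : 2 * s * d ≠ 0 := by positivity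
      rw [normFactor, xDivSinh, if_neg hne, one_div, ← Real.sqrt_inv, ← Real.sqrt_inv,
        ← Real.sqrt_mul (by positivity)]
      congr 1
      field_simp
    · rw [quadCoeff_of_ne hd.ne' hτ.ne']
      field_simp
      ring

lemma xDivSinh_nonneg (x : ℝ) : 0 ≤ xDivSinh x := by
  unfold xDivSinh
  split_ifs with h
  · exact zero_le_one
  · rcases le_total 0 x with hx | hx
    · exact div_nonneg hx (Real.sinh_nonneg_iff.2 hx)
    · exact div_nonneg_of_nonpos hx (Real.sinh_nonpos_iff.2 hx)

/-- A product of functions has the sum of their logarithmic derivatives as logarithmic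
derivative. -/
lemma hasDerivAt_prod_log {ι : Type*} (s : Finset ι) (p : ι → ℝ → ℝ) (q : ι → ℝ) (τ : ℝ)
    (h : ∀ k, HasDerivAt (p k) (p k τ * q k) τ) :
    HasDerivAt (fun t => ∏ k ∈ s, p k t) ((∏ k ∈ s, p k τ) * ∑ k ∈ s, q k) τ := by
  classical
  induction s using Finset.induction_on with
  | empty => simpa using hasDerivAt_const τ (1 : ℝ)
  | insert k s hk ih =>
    simp only [Finset.prod_insert hk, Finset.sum_insert hk]
    refine ((h k).mul ih).congr_deriv ?_
    ring

/-! ### Spectral coordinates -/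

lemma dotProduct_matFun {n : ℕ} (U : Matrix (Fin n) (Fin n) ℝ) (d : Fin n → ℝ) (f : ℝ → ℝ)
    (x y : Fin n → ℝ) :
    x ⬝ᵥ (matFun U d f *ᵥ y) = ∑ k, f (d k) * (x ᵥ* U) k * (y ᵥ* U) k := by
  rw [matFun, ← Matrix.mulVec_mulVec, ← Matrix.mulVec_mulVec, Matrix.dotProduct_mulVec,
    Matrix.mulVec_transpose]
  simp only [dotProduct, Matrix.mulVec_diagonal]
  exact Finset.sum_congr rfl fun k _ => by ring

lemma det_matFun {n : ℕ} {U : Matrix (Fin n) (Fin n) ℝ} (hU : U * Uᵀ = 1) (d : Fin n → ℝ)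
    (f : ℝ → ℝ) : (matFun U d f).det = ∏ k, f (d k) := by
  rw [matFun, Matrix.det_mul_right_comm, hU, one_mul, Matrix.det_diagonal]

lemma dotProduct_vecMul_orthogonal {n : ℕ} {U : Matrix (Fin n) (Fin n) ℝ} (hU : U * Uᵀ = 1)
    (x y : Fin n → ℝ) : (x ᵥ* U) ⬝ᵥ (y ᵥ* U) = x ⬝ᵥ y := by
  rw [← Matrix.mulVec_transpose U y, Matrix.dotProduct_mulVec, Matrix.vecMul_vecMul, hU,
    Matrix.vecMul_one]

lemma sq_conj_diagonal {n : ℕ} {U : Matrix (Fin n) (Fin n) ℝ} (hU : U * Uᵀ = 1)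
    (d : Fin n → ℝ) :
    (U * Matrix.diagonal d * Uᵀ) ^ 2 = U * Matrix.diagonal (fun i => d i ^ 2) * Uᵀ := by
  have hU' : Uᵀ * U = 1 := mul_eq_one_comm.1 hU
  calc (U * Matrix.diagonal d * Uᵀ) ^ 2
      = U * Matrix.diagonal d * (Uᵀ * U) * Matrix.diagonal d * Uᵀ := by
        rw [pow_two]; simp only [Matrix.mul_assoc]
    _ = _ := by
        rw [hU', Matrix.mul_one, Matrix.mul_assoc U, Matrix.diagonal_mul_diagonal]
        simp only [pow_two]

lemma norm_sq_vecMul {n : ℕ} {B U : Matrix (Fin n) (Fin n) ℝ} {d : Fin n → ℝ}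
    (hU : U * Uᵀ = 1) (hB : (U * Matrix.diagonal d * Uᵀ) ^ 2 = B * Bᵀ) (x : Fin n → ℝ) :
    (x ᵥ* B) ⬝ᵥ (x ᵥ* B) = ∑ k, d k ^ 2 * (x ᵥ* U) k ^ 2 := by
  have h := dotProduct_matFun U d (fun t => t ^ 2) x x
  rw [matFun, ← sq_conj_diagonal hU, hB, ← Matrix.mulVec_mulVec, Matrix.dotProduct_mulVec,
    Matrix.mulVec_transpose] at h
  rw [h]
  exact Finset.sum_congr rfl fun k _ => by ring

/-- The identity `Bᵀ g(D)² B = E² g(E)²` for `D = (BBᵀ)^{1/2}`, `E = (BᵀB)^{1/2}`, as quadratic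
forms evaluated at `a`. In the singular bases, `M = UᵀBV`
satisfies `d k ^ 2 * M k j = M k j * e j ^ 2`, so `M` is supported where `d k = e j` and
intertwines `g(d)` with `g(e)`. -/
lemma sum_intertwine {n : ℕ} {B U V : Matrix (Fin n) (Fin n) ℝ} {d e : Fin n → ℝ}
    (hU : U * Uᵀ = 1) (hV : V * Vᵀ = 1) (hd : ∀ i, 0 ≤ d i) (he : ∀ i, 0 ≤ e i)
    (hBBt : (U * Matrix.diagonal d * Uᵀ) ^ 2 = B * Bᵀ)
    (hBtB : (V * Matrix.diagonal e * Vᵀ) ^ 2 = Bᵀ * B) (g : ℝ → ℝ) (a : Fin n → ℝ) :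
    ∑ k, g (d k) ^ 2 * ((B *ᵥ a) ᵥ* U) k ^ 2 = ∑ j, e j ^ 2 * g (e j) ^ 2 * (a ᵥ* V) j ^ 2 := by
  have hU' : Uᵀ * U = 1 := mul_eq_one_comm.1 hU
  have hV' : Vᵀ * V = 1 := mul_eq_one_comm.1 hV
  have hM : Matrix.diagonal (fun i => d i ^ 2) * (Uᵀ * B * V)
      = (Uᵀ * B * V) * Matrix.diagonal (fun i => e i ^ 2) := by
    have h1 : Matrix.diagonal (fun i => d i ^ 2) * Uᵀ = Uᵀ * (B * Bᵀ) := by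
      rw [← hBBt, sq_conj_diagonal hU, ← Matrix.mul_assoc, ← Matrix.mul_assoc, hU',
        Matrix.one_mul]
    have h2 : V * Matrix.diagonal (fun i => e i ^ 2) = (Bᵀ * B) * V := by
      rw [← hBtB, sq_conj_diagonal hV, Matrix.mul_assoc _ Vᵀ, hV', Matrix.mul_one]
    rw [Matrix.mul_assoc (Uᵀ * B), h2, Matrix.mul_assoc Uᵀ, ← Matrix.mul_assoc _ Uᵀ, h1]
    simp only [Matrix.mul_assoc]
  set M := Uᵀ * B * V with hMdef
  have hsupp : ∀ k j, g (d k) * M k j = M k j * g (e j) := by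
    intro k j
    have h := congrFun (congrFun hM k) j
    rw [Matrix.diagonal_mul, Matrix.mul_diagonal] at h
    by_cases h0 : M k j = 0
    · simp [h0]
    · have : d k ^ 2 = e j ^ 2 := mul_right_cancel₀ h0 (by rw [h, mul_comm])
      rw [(pow_left_inj₀ (hd k) (he j) two_ne_zero).1 this, mul_comm]
  have hBa : (B *ᵥ a) ᵥ* U = M *ᵥ (a ᵥ* V) := by
    rw [← Matrix.mulVec_transpose V, ← Matrix.mulVec_transpose U, Matrix.mulVec_mulVec,
      Matrix.mulVec_mulVec, hMdef, Matrix.mul_assoc _ V, hV, Matrix.mul_one]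
  set β : Fin n → ℝ := fun j => g (e j) * (a ᵥ* V) j with hβ
  have h1 : ∀ k, g (d k) * ((B *ᵥ a) ᵥ* U) k = (M *ᵥ β) k := by
    intro k
    rw [hBa]
    simp only [Matrix.mulVec, dotProduct, Finset.mul_sum, hβ]
    exact Finset.sum_congr rfl fun j _ => by
      rw [← mul_assoc, hsupp, mul_assoc]
  have hMM : Mᵀ * M = Matrix.diagonal (fun i => e i ^ 2) := by
    have h2 : Mᵀ * M = Vᵀ * (Bᵀ * ((U * Uᵀ) * B)) * V := by
      simp only [hMdef, Matrix.transpose_mul, Matrix.transpose_transpose, Matrix.mul_assoc]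
    rw [h2, hU, Matrix.one_mul, ← hBtB, sq_conj_diagonal hV, Matrix.mul_assoc, Matrix.mul_assoc,
      hV', Matrix.mul_one, ← Matrix.mul_assoc, hV', Matrix.one_mul]
  calc ∑ k, g (d k) ^ 2 * ((B *ᵥ a) ᵥ* U) k ^ 2
      = (M *ᵥ β) ⬝ᵥ (M *ᵥ β) := by
        simp only [dotProduct, ← h1]
        exact Finset.sum_congr rfl fun k _ => by ring
    _ = β ⬝ᵥ (Matrix.diagonal (fun i => e i ^ 2) *ᵥ β) := by
        rw [← hMM, ← Matrix.mulVec_mulVec β Mᵀ M, Matrix.dotProduct_mulVec β, Matrix.vecMul_transpose]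
    _ = _ := by
        simp only [dotProduct, Matrix.mulVec_diagonal, hβ]
        exact Finset.sum_congr rfl fun k _ => by ring

/-! ### Derivatives in the space variable -/

lemma update_vecMul {n : ℕ} (U : Matrix (Fin n) (Fin n) ℝ) (Y : Fin n → ℝ) (i : Fin n) (z : ℝ)
    (k : Fin n) : (Function.update Y i z ᵥ* U) k = (Y ᵥ* U) k + (z - Y i) * U i k := by
  have : Function.update Y i z = Y + Pi.single i (z - Y i) := by
    ext j
    by_cases h : j = i
    · subst h; simp
    · simp [h]
  rw [this, Matrix.add_vecMul, Pi.add_apply, Matrix.single_vecMul]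
  simp

/-- The second derivative along a coordinate axis of the exponential of a quadratic polynomial
written in rotated coordinates. -/
lemma deriv_deriv_exp_quadratic {n : ℕ} (K r y : ℝ) (q l w u : Fin n → ℝ) :
    deriv (fun z => deriv (fun t => K * Real.exp
        (∑ k, (q k * (w k + (t - y) * u k) ^ 2 - l k * (w k + (t - y) * u k)) - r)) z) y
      = K * Real.exp (∑ k, (q k * w k ^ 2 - l k * w k) - r) *
        ((∑ k, u k * (2 * q k * w k - l k)) ^ 2 + ∑ k, 2 * q k * u k ^ 2) := by
  have hw : ∀ k z, HasDerivAt (fun t => w k + (t - y) * u k) (u k) z := fun k z => by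
    simpa using (((hasDerivAt_id z).sub_const y).mul_const (u k)).const_add (w k)
  set S : ℝ → ℝ := fun t =>
    ∑ k, (q k * (w k + (t - y) * u k) ^ 2 - l k * (w k + (t - y) * u k)) - r with hS
  set G : ℝ → ℝ := fun t => ∑ k, u k * (2 * q k * (w k + (t - y) * u k) - l k) with hG
  have hSd : ∀ z, HasDerivAt S (G z) z := by
    intro z
    refine HasDerivAt.sub_const r ?_
    refine HasDerivAt.fun_sum fun k _ => ?_
    refine ((((hw k z).pow 2).const_mul (q k)).sub ((hw k z).const_mul (l k))).congr_deriv ?_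
    simp; ring
  have hGd : HasDerivAt G (∑ k, 2 * q k * u k ^ 2) y := by
    refine HasDerivAt.fun_sum fun k _ => ?_
    refine ((((hw k y).const_mul (2 * q k)).sub_const (l k)).const_mul (u k)).congr_deriv ?_
    ring
  have h1 : ∀ z, HasDerivAt (fun t => K * Real.exp (S t)) (K * (Real.exp (S z) * G z)) z :=
    fun z => (hSd z).exp.const_mul K
  have h2 : (fun z => deriv (fun t => K * Real.exp (S t)) z)
      = fun z => K * (Real.exp (S z) * G z) := funext fun z => (h1 z).deriv
  rw [h2, (((hSd y).exp.fun_mul hGd).const_mul K).deriv]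
  have hSy : S y = ∑ k, (q k * w k ^ 2 - l k * w k) - r := by simp [hS]
  have hGy : G y = ∑ k, u k * (2 * q k * w k - l k) := by simp [hG]
  rw [hSy, hGy]
  ring

/-! ### The heat equation -/

/-- Proposition 3: the `n`-dimensional Mehler-type kernel `Φ(τ,Y,a,B)` solves
`∂Φ/∂τ - ΔΦ + (a+YB)(a+YB)ᵀ Φ = 0`, where `Θ = √(4τ²BBᵀ)`, `Θ♯ = √(4τ²BᵀB)`. -/
theorem phi_n_dim_heat_equation {n : ℕ} (a : Fin n → ℝ)
    (B U V : Matrix (Fin n) (Fin n) ℝ) (d e : Fin n → ℝ)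
    (hU : U * Uᵀ = 1) (hV : V * Vᵀ = 1)
    (hd : ∀ i, 0 ≤ d i) (he : ∀ i, 0 ≤ e i)
    (hBBt : (U * Matrix.diagonal d * Uᵀ) ^ 2 = B * Bᵀ)
    (hBtB : (V * Matrix.diagonal e * Vᵀ) ^ 2 = Bᵀ * B)
    (Φ : ℝ → (Fin n → ℝ) → ℝ)
    (hΦ : ∀ τ Y, Φ τ Y =
      (1 / Real.sqrt (4 * π * τ)) ^ n *
        Real.sqrt (Matrix.det (matFun U (fun i => 2 * τ * d i) xDivSinh)) *
        Real.exp
          (-(1 / (4 * τ)) * (Y ⬝ᵥ (matFun U (fun i => 2 * τ * d i) xCoshDivSinh *ᵥ Y))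
            - 2 * τ * (Y ⬝ᵥ ((matFun U (fun i => 2 * τ * d i) coshSubOneDivXSinh * B) *ᵥ a))
            - 2 * τ * (a ⬝ᵥ (matFun V (fun i => 2 * τ * e i) coshSubOneDivXSinh *ᵥ a)))) :
    ∀ τ : ℝ, 0 < τ → ∀ Y : Fin n → ℝ,
      deriv (fun s => Φ s Y) τ
        - (∑ i : Fin n,
            deriv (fun z => deriv (fun w => Φ τ (Function.update Y i w)) z) (Y i))
        + ((a + Y ᵥ* B) ⬝ᵥ (a + Y ᵥ* B)) * Φ τ Y = 0 := by
  intro τ hτ Y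
  set m : Fin n → ℝ := (B *ᵥ a) ᵥ* U with hm
  set α : Fin n → ℝ := a ᵥ* V with hα
  have hform : ∀ s Z, 0 < s → Φ s Z = (∏ k, normFactor (d k) s) * Real.exp
      (∑ k, (quadCoeff (d k) s * (Z ᵥ* U) k ^ 2 - linCoeff (d k) s * m k * (Z ᵥ* U) k)
        - ∑ j, linCoeff (e j) s * α j ^ 2) := by
    intro s Z hs
    rw [hΦ, det_matFun hU, ← Matrix.mulVec_mulVec, dotProduct_matFun, dotProduct_matFun,
      dotProduct_matFun, Finset.sum_sub_distrib, Finset.mul_sum, Finset.mul_sum, Finset.mul_sum]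
    congr 1
    · simp only [normFactor, Finset.prod_mul_distrib, Finset.prod_const, Finset.card_univ,
        Fintype.card_fin]
      rw [Real.sqrt_prod _ fun k _ => xDivSinh_nonneg _]
    · congr 1
      congr 1
      · congr 1 <;> refine Finset.sum_congr rfl fun k _ => ?_
        · rw [quadCoeff]; ring
        · rw [linCoeff]; ring
      · refine Finset.sum_congr rfl fun k _ => ?_
        rw [linCoeff]; ring
  set w : Fin n → ℝ := Y ᵥ* U with hw
  have htime : deriv (fun s => Φ s Y) τ = Φ τ Y * (∑ k, 2 * quadCoeff (d k) τ
      + (∑ k, ((4 * quadCoeff (d k) τ ^ 2 - d k ^ 2) * w k ^ 2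
          - (1 - d k ^ 2 * linCoeff (d k) τ ^ 2) * m k * w k)
        - ∑ j, (1 - e j ^ 2 * linCoeff (e j) τ ^ 2) * α j ^ 2)) := by
    have hP := hasDerivAt_prod_log Finset.univ (fun k => normFactor (d k)) _ τ
      fun k => hasDerivAt_normFactor (hd k) hτ
    have hS : HasDerivAt (fun s =>
        ∑ k, (quadCoeff (d k) s * w k ^ 2 - linCoeff (d k) s * m k * w k)
          - ∑ j, linCoeff (e j) s * α j ^ 2) _ τ :=
      (HasDerivAt.fun_sum (u := Finset.univ) fun k _ =>
        ((hasDerivAt_quadCoeff (hd k) hτ).mul_const (w k ^ 2)).sub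
          (((hasDerivAt_linCoeff (hd k) hτ).mul_const (m k)).mul_const (w k))).sub
        (HasDerivAt.fun_sum (u := Finset.univ) fun j _ =>
          (hasDerivAt_linCoeff (he j) hτ).mul_const (α j ^ 2))
    have hev : (fun s => Φ s Y) =ᶠ[nhds τ] _ :=
      (eventually_pos hτ).mono fun s hs => hform s Y hs
    rw [hev.deriv_eq, (hP.fun_mul hS.exp).deriv, hform τ Y hτ]
    ring
  have hspace : ∀ i, deriv (fun z => deriv (fun t => Φ τ (Function.update Y i t)) z) (Y i)
      = Φ τ Y * ((∑ k, U i k * (2 * quadCoeff (d k) τ * w k - linCoeff (d k) τ * m k)) ^ 2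
        + ∑ k, 2 * quadCoeff (d k) τ * U i k ^ 2) := by
    intro i
    simp only [hform τ _ hτ, update_vecMul]
    exact deriv_deriv_exp_quadratic _ _ _ _ _ _ _
  have hU' : Uᵀ * U = 1 := mul_eq_one_comm.1 hU
  -- Orthogonality of `U`: the gradient has the same norm in the coordinates `w`.
  have hgrad : ∀ G : Fin n → ℝ, ∑ i, (∑ k, U i k * G k) ^ 2 = ∑ k, G k ^ 2 := by
    intro G
    have := dotProduct_vecMul_orthogonal (U := Uᵀ) (by simpa using hU') G G
    simp only [Matrix.vecMul_transpose, dotProduct, Matrix.mulVec] at this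
    simpa only [pow_two] using this
  have hlap : ∑ i, ∑ k, 2 * quadCoeff (d k) τ * U i k ^ 2 = ∑ k, 2 * quadCoeff (d k) τ := by
    rw [Finset.sum_comm]
    refine Finset.sum_congr rfl fun k _ => ?_
    have h := congrFun (congrFun hU' k) k
    simp only [Matrix.mul_apply, Matrix.transpose_apply, Matrix.one_apply_eq] at h
    rw [← Finset.mul_sum]
    simp only [pow_two, h, mul_one]
  have hpot : (a + Y ᵥ* B) ⬝ᵥ (a + Y ᵥ* B)
      = ∑ j, α j ^ 2 + 2 * ∑ k, w k * m k + ∑ k, d k ^ 2 * w k ^ 2 := by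
    have h1 : a ⬝ᵥ a = ∑ j, α j ^ 2 := by
      rw [← dotProduct_vecMul_orthogonal hV]; simp only [dotProduct, pow_two, hα]
    have h2 : (Y ᵥ* B) ⬝ᵥ a = ∑ k, w k * m k := by
      rw [← Matrix.dotProduct_mulVec, ← dotProduct_vecMul_orthogonal hU]; rfl
    rw [add_dotProduct, dotProduct_add, dotProduct_add, dotProduct_comm a (Y ᵥ* B), h1, h2,
      norm_sq_vecMul hU hBBt]
    ring
  have hconst := sum_intertwine hU hV hd he hBBt hBtB (fun x => linCoeff x τ) a
  rw [← hm, ← hα] at hconst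
  have hcombine : ∑ k, ((4 * quadCoeff (d k) τ ^ 2 - d k ^ 2) * w k ^ 2
          - (1 - d k ^ 2 * linCoeff (d k) τ ^ 2) * m k * w k)
      = ∑ k, (2 * quadCoeff (d k) τ * w k - linCoeff (d k) τ * m k) ^ 2
        - 2 * ∑ k, w k * m k - ∑ k, d k ^ 2 * w k ^ 2
        - ∑ k, linCoeff (d k) τ ^ 2 * m k ^ 2 := by
    rw [Finset.mul_sum, ← Finset.sum_sub_distrib, ← Finset.sum_sub_distrib,
      ← Finset.sum_sub_distrib]
    refine Finset.sum_congr rfl fun k _ => ?_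
    linear_combination (w k * m k) * four_mul_quadCoeff_mul_linCoeff (hd k) hτ
  have hsplit : ∑ j, (1 - e j ^ 2 * linCoeff (e j) τ ^ 2) * α j ^ 2
      = ∑ j, α j ^ 2 - ∑ j, e j ^ 2 * linCoeff (e j) τ ^ 2 * α j ^ 2 := by
    rw [← Finset.sum_sub_distrib]
    exact Finset.sum_congr rfl fun j _ => by ring
  simp only [hspace]
  rw [← Finset.mul_sum, Finset.sum_add_distrib, hgrad, hlap, htime, hpot, hcombine, hsplit,
    hconst]
  ring
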